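/- (Strict contraction of the total Jacobian.) Let N be a positive integer, let T_0, …, T_{N−1} be d×d complex matrices, let t_0, …, t_{N−1} ∈ [0,1), and suppose there exists γ ∈ [0,1) with ‖T_n‖₂ ≤ γ for all n. Define J^{(0)} = I and J^{(i+1)} = t_i I + (1 − t_i) T_i J^{(i)} for i = 0, …, N−1. Then the total Jacobian is strictly contractive: ‖J^{(N)}‖₂ < 1. -/

import Mathlib

open scoped Matrix.Norms.L2Operator

/-- The Jacobian recursion `J⁽⁰⁾ = I`, `J⁽ⁱ⁺¹⁾ = t_i I + (1 − t_i) T_i J⁽ⁱ⁾`. -/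
noncomputable def jacRec {d : ℕ} (T : ℕ → Matrix (Fin d) (Fin d) ℂ) (t : ℕ → ℝ) :
    ℕ → Matrix (Fin d) (Fin d) ℂ
  | 0 => 1
  | i + 1 => t i • (1 : Matrix (Fin d) (Fin d) ℂ) + (1 - t i) • (T i * jacRec T t i)

/-! A convex combination `s x + (1 - s) y` with `s < 1`, `‖x‖ ≤ 1` and `‖y‖ < 1` has norm `< 1`.
Since `1` and every `T n` lie in the closed unit ball, so does each iterate. A step at which
`T k` is a strict contraction takes the iterate into the open unit ball, and later steps keep it
there because their weight `1 - t n` on `T n * J n` is positive. -/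

section NormedSpace

variable {E : Type*} [SeminormedAddCommGroup E] [NormedSpace ℝ E] {x y : E} {s : ℝ}

theorem norm_smul_add_one_sub_smul_le_one (hs : s ∈ Set.Icc (0 : ℝ) 1)
    (hx : ‖x‖ ≤ 1) (hy : ‖y‖ ≤ 1) : ‖s • x + (1 - s) • y‖ ≤ 1 := by
  rw [← mem_closedBall_zero_iff] at hx hy ⊢
  exact convex_closedBall 0 1 hx hy hs.1 (sub_nonneg.2 hs.2) (add_sub_cancel s 1)

theorem norm_smul_add_one_sub_smul_lt_one (hs : s ∈ Set.Ico (0 : ℝ) 1)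
    (hx : ‖x‖ ≤ 1) (hy : ‖y‖ < 1) : ‖s • x + (1 - s) • y‖ < 1 := by
  have hs' : 0 < 1 - s := sub_pos.2 hs.2
  calc
    ‖s • x + (1 - s) • y‖ ≤ ‖s • x‖ + ‖(1 - s) • y‖ := norm_add_le _ _
    _ = s * ‖x‖ + (1 - s) * ‖y‖ := by
      rw [norm_smul_of_nonneg hs.1, norm_smul_of_nonneg hs'.le]
    _ < s * 1 + (1 - s) * 1 :=
      add_lt_add_of_le_of_lt (mul_le_mul_of_nonneg_left hx hs.1) (mul_lt_mul_of_pos_left hy hs')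
    _ = 1 := by ring

end NormedSpace

/-- The Jacobian recursion `J 0 = 1`, `J (n + 1) = t n • 1 + (1 - t n) • (T n * J n)` in an
arbitrary real algebra; `jacRec` is the case of complex matrices. -/
noncomputable def anchoredProd {A : Type*} [Ring A] [Algebra ℝ A] (T : ℕ → A) (t : ℕ → ℝ) : ℕ → A
  | 0 => 1
  | n + 1 => t n • (1 : A) + (1 - t n) • (T n * anchoredProd T t n)

section NormedAlgebra

variable {A : Type*} [SeminormedRing A] [NormedAlgebra ℝ A] {T : ℕ → A} {t : ℕ → ℝ} {k N : ℕ}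

theorem norm_anchoredProd_le_one (h_one : ‖(1 : A)‖ ≤ 1)
    (ht : ∀ n < N, t n ∈ Set.Icc (0 : ℝ) 1) (hT : ∀ n < N, ‖T n‖ ≤ 1) :
    ‖anchoredProd T t N‖ ≤ 1 := by
  induction N with
  | zero => exact h_one
  | succ n ih =>
    have hJ : ‖anchoredProd T t n‖ ≤ 1 :=
      ih (fun m hm ↦ ht m (hm.trans n.lt_succ_self)) fun m hm ↦ hT m (hm.trans n.lt_succ_self)
    have hTJ : ‖T n * anchoredProd T t n‖ ≤ 1 :=
      (norm_mul_le _ _).trans (mul_le_one₀ (hT n n.lt_succ_self) (norm_nonneg _) hJ)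
    exact norm_smul_add_one_sub_smul_le_one (ht n n.lt_succ_self) h_one hTJ

theorem norm_anchoredProd_succ_lt_one (h_one : ‖(1 : A)‖ ≤ 1) (ht : t k ∈ Set.Ico (0 : ℝ) 1)
    (hTJ : ‖T k‖ * ‖anchoredProd T t k‖ < 1) : ‖anchoredProd T t (k + 1)‖ < 1 :=
  norm_smul_add_one_sub_smul_lt_one ht h_one ((norm_mul_le _ _).trans_lt hTJ)

theorem norm_anchoredProd_lt_one_of_le (h_one : ‖(1 : A)‖ ≤ 1) (hkN : k ≤ N)
    (ht : ∀ n < N, k ≤ n → t n ∈ Set.Ico (0 : ℝ) 1) (hT : ∀ n < N, k ≤ n → ‖T n‖ ≤ 1)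
    (hJ : ‖anchoredProd T t k‖ < 1) : ‖anchoredProd T t N‖ < 1 := by
  induction N, hkN using Nat.le_induction with
  | base => exact hJ
  | succ n hkn ih =>
    have hJn : ‖anchoredProd T t n‖ < 1 :=
      ih (fun m hm ↦ ht m (hm.trans n.lt_succ_self)) fun m hm ↦ hT m (hm.trans n.lt_succ_self)
    exact norm_anchoredProd_succ_lt_one h_one (ht n n.lt_succ_self hkn)
      (mul_lt_one_of_nonneg_of_lt_one_right (hT n n.lt_succ_self hkn) (norm_nonneg _) hJn)

theorem total_jacobian_strict_contraction_general (h_one : ‖(1 : A)‖ ≤ 1) (hkN : k < N)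
    (ht : ∀ n < N, t n ∈ Set.Icc (0 : ℝ) 1) (ht_lt : ∀ n < N, k ≤ n → t n < 1)
    (hT : ∀ n < N, ‖T n‖ ≤ 1) (hTk : ‖T k‖ < 1) :
    ‖anchoredProd T t N‖ < 1 := by
  have ht_Ico : ∀ n < N, k ≤ n → t n ∈ Set.Ico (0 : ℝ) 1 := fun n hn hkn ↦
    ⟨(ht n hn).1, ht_lt n hn hkn⟩
  have hJ : ‖anchoredProd T t k‖ ≤ 1 :=
    norm_anchoredProd_le_one h_one (fun n hn ↦ ht n (hn.trans hkN)) fun n hn ↦ hT n (hn.trans hkN)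
  have hJ_succ : ‖anchoredProd T t (k + 1)‖ < 1 :=
    norm_anchoredProd_succ_lt_one h_one (ht_Ico k hkN le_rfl)
      (mul_lt_one_of_nonneg_of_lt_one_left (norm_nonneg _) hTk hJ)
  exact norm_anchoredProd_lt_one_of_le h_one hkN
    (fun n hn hkn ↦ ht_Ico n hn (Nat.le_of_succ_le hkn)) (fun n hn _ ↦ hT n hn) hJ_succ

end NormedAlgebra

theorem jacRec_eq_anchoredProd {d : ℕ} (T : ℕ → Matrix (Fin d) (Fin d) ℂ) (t : ℕ → ℝ) (n : ℕ) :
    jacRec T t n = anchoredProd T t n := by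
  induction n with
  | zero => rfl
  | succ n ih => rw [jacRec, anchoredProd, ih]

/-- **Strict contraction of the total Jacobian.**  If `t_n ∈ [0,1)` and there is `γ ∈ [0,1)`
with `‖T_n‖₂ ≤ γ` for all `n`, then `‖J⁽ᴺ⁾‖₂ < 1`. -/
theorem total_jacobian_strict_contraction {d N : ℕ} (hN : 0 < N)
    (T : ℕ → Matrix (Fin d) (Fin d) ℂ)
    (t : ℕ → ℝ) (ht : ∀ n < N, t n ∈ Set.Ico (0 : ℝ) 1)
    (γ : ℝ) (hγ : γ ∈ Set.Ico (0 : ℝ) 1) (hT : ∀ n < N, ‖T n‖ ≤ γ) :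
    ‖jacRec T t N‖ < 1 := by
  have hT_lt : ∀ n < N, ‖T n‖ < 1 := fun n hn ↦ (hT n hn).trans_lt hγ.2
  rw [jacRec_eq_anchoredProd]
  exact total_jacobian_strict_contraction_general (IsStarProjection.one _).norm_le hN
    (fun n hn ↦ Set.Ico_subset_Icc_self (ht n hn)) (fun n hn _ ↦ (ht n hn).2)
    (fun n hn ↦ (hT_lt n hn).le) (hT_lt 0 hN)
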